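/- Let p be a prime number and let Y be a nontrivial additive subgroup of ℚ such that p·Y = Y and q·Y ≠ Y for every prime q ≠ p. Let n ≥ 2 and let r_1, …, r_n be nonzero rational numbers such that r_j·Y = Y for each j and r_1² + ⋯ + r_n² = 1. Let f : Y → ℂ be a positive definite function with f(0) = 1 satisfying f(y) = ∏_{j=1}^n f(r_j y) for all y ∈ Y. Then there exist a real number σ ≥ 0, an additive subgroup E of Y with the property that for every y ∈ Y one has y ∈ E if and only if p·y ∈ E, and a character χ of Y, such that f(y) = χ(y)·exp(−σ y²) for all y ∈ E and f(y) = 0 for all y ∈ Y with y ∉ E. -/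

import Mathlib

open scoped BigOperators

/-- A function `f : G → ℂ` on an additive abelian group is positive definite if every
quadratic form `∑ cᵢ c̄ⱼ f(yᵢ - yⱼ)` is a nonnegative real number. -/
def IsPositiveDefinite {G : Type*} [AddCommGroup G] (f : G → ℂ) : Prop :=
  ∀ (n : ℕ) (y : Fin n → G) (c : Fin n → ℂ),
    ∃ t : ℝ, 0 ≤ t ∧ ∑ i, ∑ j, c i * (starRingEnd ℂ) (c j) * f (y i - y j) = (t : ℂ)

/-- The image of a subgroup of `ℚ` under multiplication by a rational number. -/
def ratSMul (r : ℚ) (Y : AddSubgroup ℚ) : Set ℚ := (fun y => r * y) '' (Y : Set ℚ)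

open Filter Topology

/-!
Let `f` solve `f y = ∏ⱼ f (rⱼ y)`. Since only `p` is invertible on `Y`, each `rⱼ` is `± p ^ (-mⱼ)`,
so the equation relates `f y` to the values of `f` at the points `± y / p ^ mⱼ`, with weights
`rⱼ² = p ^ (-2 mⱼ)` of sum `1`.

*Modulus.* By Krein's inequality `|f (x + y) - f x f y|² ≤ (1 - |f x|²) (1 - |f y|²)`, the function
`√(1 - |f|²)` is a seminorm; hence `p ^ (2k) (1 - |f (y / p ^ k)|²)` increases with `k`. The
functional equation makes `-p ^ (2k) log |f (y / p ^ k)|²` a weighted mean of later terms of the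
same sequence. Comparing the two sequences, if `f` is nonzero at one of the points `y / p ^ k` then
it is nonzero at all of them, both sequences converge to the same limit, and the second one, being
a mean of its later terms, is constant. So the support of `f` is a `p`-divisible subgroup, on which
`√(-log |f|²)`, being a limit of rescaled seminorms, is a seminorm; it is multiplied by `p` under
`y ↦ p y`. Such a seminorm on a subgroup of `ℚ` is `c |y|`, so `|f|` is Gaussian.

*Phase.* The defect `|phase f (x + y) - phase f x · phase f y|` at `(x, y)` is at most the sum of
the defects at `(x / p ^ mⱼ, y / p ^ mⱼ)`, so `p ^ (2k)` times the defect at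
`(x / p ^ k, y / p ^ k)` is at most a weighted mean of later terms of the same sequence. For a
Gaussian modulus the leading terms of the two sides of Krein's inequality cancel at the origin,
which forces this sequence to tend to `0`, hence to vanish. The phase is thus a character of the
support, and it extends to `Y` because the circle group is divisible.
-/

theorem frequently_atTop_of_forall_exists_gt {S : ℕ → Prop} {k : ℕ} (hk : S k)
    (step : ∀ i, S i → ∃ l > i, S l) : ∃ᶠ l in atTop, S l := by
  refine frequently_atTop.2 fun N => ?_
  induction N with
  | zero => exact ⟨k, k.zero_le, hk⟩
  | succ N ih =>
    obtain ⟨i, hNi, hi⟩ := ih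
    obtain ⟨l, hil, hl⟩ := step i hi
    exact ⟨l, by omega, hl⟩

section WeightedMean

variable {ι : Type*} [Fintype ι] {w : ι → ℝ} {m : ι → ℕ}

theorem exists_le_of_le_weighted_sum (hw : ∀ j, 0 ≤ w j) (hw1 : ∑ j, w j = 1) {c : ℝ} {x : ι → ℝ}
    (h : c ≤ ∑ j, w j * x j) : ∃ j, c ≤ x j := by
  by_contra! hlt
  exact h.not_gt ((convex_Iio c).sum_mem (fun j _ => hw j) hw1 fun j _ => hlt j)

theorem le_of_tendsto_of_le_weighted_sum (hw : ∀ j, 0 ≤ w j) (hw1 : ∑ j, w j = 1)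
    (hm : ∀ j, 0 < m j) {u : ℕ → ℝ} (hu : ∀ k, u k ≤ ∑ j, w j * u (k + m j)) {L : ℝ}
    (hL : Tendsto u atTop (𝓝 L)) (k : ℕ) : u k ≤ L := by
  refine ge_of_tendsto_of_frequently hL (frequently_atTop_of_forall_exists_gt le_rfl fun i hi => ?_)
  obtain ⟨j, hj⟩ := exists_le_of_le_weighted_sum hw hw1 (hu i)
  exact ⟨i + m j, Nat.lt_add_of_pos_right (hm j), hi.trans hj⟩

theorem eq_of_tendsto_of_eq_weighted_sum (hw : ∀ j, 0 ≤ w j) (hw1 : ∑ j, w j = 1)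
    (hm : ∀ j, 0 < m j) {u : ℕ → ℝ} (hu : ∀ k, u k = ∑ j, w j * u (k + m j)) {L : ℝ}
    (hL : Tendsto u atTop (𝓝 L)) (k : ℕ) : u k = L := by
  refine le_antisymm (le_of_tendsto_of_le_weighted_sum hw hw1 hm (fun i => (hu i).le) hL k) ?_
  refine neg_le_neg_iff.1 (le_of_tendsto_of_le_weighted_sum hw hw1 hm (fun i => ?_) hL.neg k)
  simpa only [mul_neg, Finset.sum_neg_distrib, neg_le_neg_iff] using (hu i).ge

end WeightedMean

theorem neg_log_isEquivalent_one_sub :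
    Asymptotics.IsEquivalent (𝓝 1) (fun x : ℝ => -Real.log x) fun x => 1 - x := by
  have h := (Real.hasDerivAt_log one_ne_zero).isLittleO.neg_left
  simp only [Real.log_one, sub_zero, inv_one, smul_eq_mul, mul_one] at h
  refine (h.congr_left fun x => ?_).trans_isBigO ?_
  · simp only [Pi.sub_apply]
    ring
  · exact (Asymptotics.isBigO_refl _ _).neg_right.congr_right fun x => neg_sub x 1

theorem tendsto_mul_one_sub_iff_tendsto_mul_neg_log {α : Type*} {l : Filter α} {a c : α → ℝ}
    (ha : Tendsto a l (𝓝 1)) {L : ℝ} :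
    Tendsto (fun k => c k * (1 - a k)) l (𝓝 L) ↔
      Tendsto (fun k => c k * -Real.log (a k)) l (𝓝 L) :=
  (Asymptotics.IsEquivalent.refl.mul
    (neg_log_isEquivalent_one_sub.comp_tendsto ha)).tendsto_nhds_iff.symm

/-- The recursion satisfied by `a k = |f (y / p ^ k)| ^ 2` when `f` solves the Pólya equation; there
`P = p ^ 2`. -/
structure IsPolyaSequence {ι : Type*} [Fintype ι] (P : ℝ) (m : ι → ℕ) (a : ℕ → ℝ) : Prop where
  one_lt : 1 < P
  pos : ∀ j, 0 < m j
  sum_eq_one : ∑ j, (P ^ m j)⁻¹ = 1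
  nonneg : ∀ k, 0 ≤ a k
  le_one : ∀ k, a k ≤ 1
  eq_prod : ∀ k, a k = ∏ j, a (k + m j)
  one_sub_le : ∀ k, 1 - a k ≤ P * (1 - a (k + 1))

namespace IsPolyaSequence

variable {ι : Type*} [Fintype ι] {P : ℝ} {m : ι → ℕ} {a : ℕ → ℝ}

theorem base_pos (h : IsPolyaSequence P m a) : 0 < P :=
  one_pos.trans h.one_lt

theorem weight_nonneg (h : IsPolyaSequence P m a) (j : ι) : 0 ≤ (P ^ m j)⁻¹ :=
  (inv_pos.2 (pow_pos h.base_pos _)).le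

theorem monotone_pow_mul_one_sub (h : IsPolyaSequence P m a) :
    Monotone fun k => P ^ k * (1 - a k) := by
  refine monotone_nat_of_le_succ fun k => ?_
  rw [pow_succ, mul_assoc]
  exact mul_le_mul_of_nonneg_left (h.one_sub_le k) (pow_pos h.base_pos k).le

theorem pow_mul_neg_log_eq_sum (h : IsPolyaSequence P m a) {k : ℕ} (hk : a k ≠ 0) :
    P ^ k * -Real.log (a k) =
      ∑ j, (P ^ m j)⁻¹ * (P ^ (k + m j) * -Real.log (a (k + m j))) := by
  have hfactor : ∀ j ∈ Finset.univ, a (k + m j) ≠ 0 := by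
    rwa [h.eq_prod k, Finset.prod_ne_zero_iff] at hk
  rw [h.eq_prod k, Real.log_prod hfactor, ← Finset.sum_neg_distrib, Finset.mul_sum]
  refine Finset.sum_congr rfl fun j _ => ?_
  have hPj : P ^ m j ≠ 0 := (pow_pos h.base_pos _).ne'
  rw [pow_add]
  field_simp

theorem pow_mul_one_sub_le_neg_log (h : IsPolyaSequence P m a) {l : ℕ} (hl : a l ≠ 0) (k : ℕ) :
    P ^ k * (1 - a k) ≤ P ^ l * -Real.log (a l) := by
  let S (i : ℕ) : Prop := a i ≠ 0 ∧ P ^ i * -Real.log (a i) ≤ P ^ l * -Real.log (a l)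
  have hS : ∃ᶠ i in atTop, S i := by
    refine frequently_atTop_of_forall_exists_gt (S := S) ⟨hl, le_rfl⟩ fun i ⟨hi, hile⟩ => ?_
    obtain ⟨j, hj⟩ := exists_le_of_le_weighted_sum (c := -(P ^ i * -Real.log (a i)))
      h.weight_nonneg h.sum_eq_one (x := fun j => -(P ^ (i + m j) * -Real.log (a (i + m j)))) <| by
        simpa only [mul_neg, Finset.sum_neg_distrib, neg_neg] using
          (neg_le_neg_iff.2 (h.pow_mul_neg_log_eq_sum hi).ge)
    have hij : a (i + m j) ≠ 0 := by
      rw [h.eq_prod i, Finset.prod_ne_zero_iff] at hi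
      exact hi j (Finset.mem_univ j)
    exact ⟨i + m j, Nat.lt_add_of_pos_right (h.pos j), hij, (neg_le_neg_iff.1 hj).trans hile⟩
  obtain ⟨i, hki, hi, hile⟩ := frequently_atTop.1 hS k
  have hlog : 1 - a i ≤ -Real.log (a i) := by
    linarith [Real.log_le_sub_one_of_pos ((h.nonneg i).lt_of_ne' hi)]
  calc P ^ k * (1 - a k) ≤ P ^ i * (1 - a i) := h.monotone_pow_mul_one_sub hki
    _ ≤ P ^ i * -Real.log (a i) := mul_le_mul_of_nonneg_left hlog (pow_pos h.base_pos i).le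
    _ ≤ P ^ l * -Real.log (a l) := hile

theorem tendsto_one (h : IsPolyaSequence P m a) {l : ℕ} (hl : a l ≠ 0) :
    Tendsto a atTop (𝓝 1) := by
  have hlim : Tendsto (fun k => 1 - P ^ l * -Real.log (a l) * P⁻¹ ^ k) atTop (𝓝 1) := by
    simpa using ((tendsto_pow_atTop_nhds_zero_of_lt_one (inv_nonneg.2 h.base_pos.le)
      (inv_lt_one_of_one_lt₀ h.one_lt)).const_mul (P ^ l * -Real.log (a l))).const_sub 1
  refine tendsto_of_tendsto_of_tendsto_of_le_of_le hlim tendsto_const_nhds (fun k => ?_) h.le_one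
  have hk : 1 - a k ≤ P ^ l * -Real.log (a l) / P ^ k :=
    (le_div_iff₀' (pow_pos h.base_pos k)).2 (h.pow_mul_one_sub_le_neg_log hl k)
  rw [div_eq_mul_inv, ← inv_pow] at hk
  linarith

theorem ne_zero (h : IsPolyaSequence P m a) {l : ℕ} (hl : a l ≠ 0) (k : ℕ) : a k ≠ 0 := by
  intro hk
  have hzeros : ∃ᶠ i in atTop, a i = 0 := by
    refine frequently_atTop_of_forall_exists_gt hk fun i hi => ?_
    rw [h.eq_prod i, Finset.prod_eq_zero_iff] at hi
    obtain ⟨j, -, hj⟩ := hi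
    exact ⟨i + m j, Nat.lt_add_of_pos_right (h.pos j), hj⟩
  exact hzeros ((h.tendsto_one hl).eventually_ne one_ne_zero)

theorem exists_tendsto_pow_mul_one_sub (h : IsPolyaSequence P m a) {l : ℕ} (hl : a l ≠ 0) :
    ∃ L, Tendsto (fun k => P ^ k * (1 - a k)) atTop (𝓝 L) :=
  ⟨_, tendsto_atTop_ciSup h.monotone_pow_mul_one_sub
    ⟨_, Set.forall_mem_range.2 (h.pow_mul_one_sub_le_neg_log hl)⟩⟩

theorem pow_mul_neg_log_eq (h : IsPolyaSequence P m a) (h0 : a 0 ≠ 0) (k : ℕ) :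
    P ^ k * -Real.log (a k) = -Real.log (a 0) := by
  obtain ⟨L, hL⟩ := h.exists_tendsto_pow_mul_one_sub h0
  have hconst := eq_of_tendsto_of_eq_weighted_sum h.weight_nonneg h.sum_eq_one h.pos
    (fun k => h.pow_mul_neg_log_eq_sum (h.ne_zero h0 k))
    ((tendsto_mul_one_sub_iff_tendsto_mul_neg_log (h.tendsto_one h0)).1 hL)
  simpa using (hconst k).trans (hconst 0).symm

end IsPolyaSequence

section AddGroupSeminorm

variable {A : Type*} [AddCommGroup A]

theorem addGroupSeminorm_nsmul_le (N : AddGroupSeminorm A) (k : ℕ) (x : A) :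
    N (k • x) ≤ k * N x :=
  letI := N.toSeminormedAddCommGroup
  norm_nsmul_le (E := A)

theorem addGroupSeminorm_pow_nsmul {N : AddGroupSeminorm A} {p : ℕ}
    (hN : ∀ x, N (p • x) = p * N x) (k : ℕ) (x : A) : N (p ^ k • x) = (p : ℝ) ^ k * N x := by
  induction k with
  | zero => rw [pow_zero, pow_zero, one_smul, one_mul]
  | succ k ih => rw [pow_succ', mul_smul, hN, ih, pow_succ', mul_assoc]

-- The slack in `N (p ^ k • x) ≤ N (k • x) + N ((p ^ k - k) • x)` must vanish.
theorem addGroupSeminorm_nsmul {N : AddGroupSeminorm A} {p : ℕ} (hp : 2 ≤ p)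
    (hN : ∀ x, N (p • x) = p * N x) (k : ℕ) (x : A) : N (k • x) = k * N x := by
  refine (addGroupSeminorm_nsmul_le N k x).antisymm ?_
  have hk : k ≤ p ^ k := (Nat.lt_pow_self hp).le
  have hsplit : N (p ^ k • x) ≤ N (k • x) + N ((p ^ k - k) • x) := by
    rw [← Nat.add_sub_of_le hk, add_smul, Nat.add_sub_cancel_left]
    exact map_add_le_add N _ _
  have hrest := addGroupSeminorm_nsmul_le N (p ^ k - k) x
  rw [addGroupSeminorm_pow_nsmul hN] at hsplit
  push_cast [Nat.cast_sub hk] at hrest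
  linarith

theorem addGroupSeminorm_zsmul {N : AddGroupSeminorm A} {p : ℕ} (hp : 2 ≤ p)
    (hN : ∀ x, N (p • x) = p * N x) (k : ℤ) (x : A) : N (k • x) = |(k : ℝ)| * N x := by
  rcases k.eq_nat_or_neg with ⟨k, rfl | rfl⟩
  · simp [addGroupSeminorm_nsmul hp hN]
  · simp [addGroupSeminorm_nsmul hp hN]

end AddGroupSeminorm

-- Any two elements of `A` are commensurable.
theorem exists_eq_mul_abs_of_map_zsmul {A : Type*} [AddCommGroup A] {i : A →+ ℚ}
    (hi : Function.Injective i) {N : A → ℝ} (hN : ∀ (k : ℤ) x, N (k • x) = |(k : ℝ)| * N x) :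
    ∃ c : ℝ, ∀ x, N x = c * |(i x : ℝ)| := by
  obtain hA | ⟨z, hz⟩ := forall_or_exists_not fun x => i x = 0
  · refine ⟨0, fun x => ?_⟩
    have hx : (0 : ℤ) • x = x := hi (by rw [hA, hA])
    rw [← hx, hN, Int.cast_zero, abs_zero, zero_mul, zero_mul]
  · refine ⟨N z / |(i z : ℝ)|, fun x => ?_⟩
    set q := i x / i z with hq
    have hcomm : (q.den : ℤ) • x = q.num • z := by
      apply hi
      rw [map_zsmul, map_zsmul, zsmul_eq_mul, zsmul_eq_mul, Int.cast_natCast,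
        ← Rat.den_mul_eq_num, mul_assoc, hq, div_mul_cancel₀ _ hz]
    have hN' : |((q.den : ℤ) : ℝ)| * N x = |(q.num : ℝ)| * N z := by rw [← hN, hcomm, hN]
    have habs : |(q.num : ℝ)| / |((q.den : ℤ) : ℝ)| = |(i x : ℝ)| / |(i z : ℝ)| := by
      rw [← abs_div, ← abs_div, Int.cast_natCast, ← Rat.cast_div, ← hq, Rat.cast_def]
    rw [div_mul_eq_mul_div, mul_div_assoc, ← habs, ← mul_div_assoc, mul_comm (N z), ← hN',
      mul_div_cancel_left₀]
    simp

namespace IsPositiveDefinite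

open scoped ComplexOrder

variable {G : Type*} [AddCommGroup G] {f : G → ℂ}

theorem map_neg (hf : IsPositiveDefinite f) (x : G) : f (-x) = (starRingEnd ℂ) (f x) := by
  obtain ⟨r, -, hr⟩ := hf 1 ![0] ![1]
  obtain ⟨s, -, hs⟩ := hf 2 ![x, 0] ![1, 1]
  obtain ⟨t, -, ht⟩ := hf 2 ![x, 0] ![1, Complex.I]
  simp only [Finset.univ_unique, Fin.default_eq_zero, Matrix.cons_val_fin_one, map_one, mul_one,
    sub_self, Finset.sum_const, Finset.card_singleton, one_smul, Complex.ext_iff, Complex.ofReal_re,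
    Complex.ofReal_im, Fin.sum_univ_two, Matrix.cons_val_zero, Matrix.cons_val_one, sub_zero,
    zero_sub, Complex.add_re, Complex.add_im, Complex.conj_I, mul_neg, neg_mul, one_mul,
    Complex.I_mul_I, neg_neg, Complex.neg_re, Complex.mul_re, Complex.I_re, zero_mul,
    Complex.I_im, Complex.neg_im, Complex.mul_im, zero_add, Complex.conj_re,
    Complex.conj_im] at hr hs ht ⊢
  constructor <;> linarith

theorem posSemidef (hf : IsPositiveDefinite f) {n : ℕ} (y : Fin n → G) :
    (Matrix.of fun i j => f (y i - y j)).PosSemidef := by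
  refine Matrix.PosSemidef.of_dotProduct_mulVec_nonneg ?_ fun x => ?_
  · ext i j
    simp only [Matrix.conjTranspose_apply, Matrix.of_apply, ← neg_sub (y i), hf.map_neg,
      RCLike.star_def, RingHomCompTriple.comp_apply, RingHom.id_apply]
  · obtain ⟨t, ht, hsum⟩ := hf n y (star x)
    have hform : star x ⬝ᵥ (Matrix.of fun i j => f (y i - y j)).mulVec x = (t : ℂ) := by
      rw [← hsum]
      simp only [dotProduct, Matrix.mulVec, Matrix.of_apply, Finset.mul_sum, Pi.star_apply,
        RCLike.star_def, RingHomCompTriple.comp_apply, RingHom.id_apply, mul_assoc,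
        mul_comm (f _)]
    rw [hform]
    exact Complex.zero_le_real.2 ht

theorem norm_le_one (hf : IsPositiveDefinite f) (h0 : f 0 = 1) (x : G) : ‖f x‖ ≤ 1 := by
  have hdet := (hf.posSemidef ![x, 0]).det_nonneg
  simp only [Matrix.det_fin_two, Matrix.of_apply, Matrix.cons_val_zero, Matrix.cons_val_one,
    sub_self, sub_zero, zero_sub, h0, hf.map_neg, mul_one, Complex.mul_conj'] at hdet
  have hsq : 0 ≤ 1 - ‖f x‖ ^ 2 := by exact_mod_cast hdet
  exact (sq_le_one_iff₀ (norm_nonneg _)).1 (sub_nonneg.1 hsq)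

theorem norm_sq_le_one (hf : IsPositiveDefinite f) (h0 : f 0 = 1) (x : G) : ‖f x‖ ^ 2 ≤ 1 :=
  pow_le_one₀ (norm_nonneg _) (hf.norm_le_one h0 x)

-- The determinant of the positive semidefinite matrix attached to the points `x, 0, -y`.
theorem norm_sub_mul_sq_le (hf : IsPositiveDefinite f) (h0 : f 0 = 1) (x y : G) :
    ‖f (x + y) - f x * f y‖ ^ 2 ≤ (1 - ‖f x‖ ^ 2) * (1 - ‖f y‖ ^ 2) := by
  have hneg : f (-y - x) = (starRingEnd ℂ) (f (x + y)) := by rw [← hf.map_neg, neg_add']; abel_nf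
  have hdet := (Complex.nonneg_iff.1 (hf.posSemidef ![x, 0, -y]).det_nonneg).1
  simp only [Matrix.det_fin_three, Matrix.of_apply, Matrix.cons_val_zero, Matrix.cons_val_one,
    Matrix.cons_val, sub_self, sub_zero, zero_sub, sub_neg_eq_add, zero_add, h0, hf.map_neg, hneg,
    one_mul, mul_one, Complex.sub_re, Complex.add_re, Complex.mul_re, Complex.mul_im,
    Complex.conj_re, Complex.conj_im, Complex.one_re] at hdet
  simp only [Complex.sq_norm, Complex.normSq_apply, Complex.sub_re, Complex.sub_im,
    Complex.mul_re, Complex.mul_im]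
  linarith

theorem mul_norm_le (hf : IsPositiveDefinite f) (h0 : f 0 = 1) (x y : G) :
    ‖f x‖ * ‖f y‖ ≤ ‖f (x + y)‖ + √(1 - ‖f x‖ ^ 2) * √(1 - ‖f y‖ ^ 2) := by
  rw [← Real.sqrt_mul (sub_nonneg.2 (hf.norm_sq_le_one h0 x)), ← norm_mul]
  have h := Real.le_sqrt_of_sq_le (hf.norm_sub_mul_sq_le h0 x y)
  have htri := norm_le_norm_add_norm_sub' (f x * f y) (f (x + y))
  rw [norm_sub_rev] at htri
  exact htri.trans (by gcongr)

theorem sqrt_one_sub_norm_sq_add_le (hf : IsPositiveDefinite f) (h0 : f 0 = 1) (x y : G) :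
    √(1 - ‖f (x + y)‖ ^ 2) ≤ √(1 - ‖f x‖ ^ 2) + √(1 - ‖f y‖ ^ 2) := by
  have hle := hf.mul_norm_le h0 x y
  have hx := Real.sq_sqrt (sub_nonneg.2 (hf.norm_sq_le_one h0 x))
  have hy := Real.sq_sqrt (sub_nonneg.2 (hf.norm_sq_le_one h0 y))
  set s := √(1 - ‖f x‖ ^ 2)
  set t := √(1 - ‖f y‖ ^ 2)
  have hs : 0 ≤ s := Real.sqrt_nonneg _
  have ht : 0 ≤ t := Real.sqrt_nonneg _
  have hst : 0 ≤ s * t := mul_nonneg hs ht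
  have hone := mul_le_mul_of_nonneg_right (hf.norm_le_one h0 (x + y)) hst
  have hprod : (‖f x‖ * ‖f y‖) ^ 2 = (1 - s ^ 2) * (1 - t ^ 2) := by
    rw [hx, hy]
    ring
  have hsq : (1 - s ^ 2) * (1 - t ^ 2) ≤ (‖f (x + y)‖ + s * t) ^ 2 :=
    hprod ▸ pow_le_pow_left₀ (mul_nonneg (norm_nonneg _) (norm_nonneg _)) hle 2
  refine Real.sqrt_le_iff.2 ⟨add_nonneg hs ht, ?_⟩
  linarith

/-- The function `√(1 - |f|²)`, a seminorm by Krein's inequality. -/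
noncomputable def seminorm (hf : IsPositiveDefinite f) (h0 : f 0 = 1) : AddGroupSeminorm G where
  toFun x := √(1 - ‖f x‖ ^ 2)
  map_zero' := by simp [h0]
  add_le' := hf.sqrt_one_sub_norm_sq_add_le h0
  neg' x := by rw [hf.map_neg, RCLike.norm_conj]

theorem seminorm_apply (hf : IsPositiveDefinite f) (h0 : f 0 = 1) (x : G) :
    hf.seminorm h0 x = √(1 - ‖f x‖ ^ 2) :=
  rfl

theorem one_sub_norm_sq_nsmul_le (hf : IsPositiveDefinite f) (h0 : f 0 = 1) (k : ℕ) (x : G) :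
    1 - ‖f (k • x)‖ ^ 2 ≤ (k : ℝ) ^ 2 * (1 - ‖f x‖ ^ 2) := by
  have h := pow_le_pow_left₀ (apply_nonneg _ _) (addGroupSeminorm_nsmul_le (hf.seminorm h0) k x) 2
  rwa [mul_pow, seminorm_apply, seminorm_apply, Real.sq_sqrt, Real.sq_sqrt] at h <;>
    exact sub_nonneg.2 (hf.norm_sq_le_one h0 _)

theorem norm_map_units_smul (hf : IsPositiveDefinite f) (ε : ℤˣ) (x : G) :
    ‖f (ε • x)‖ = ‖f x‖ := by
  rcases Int.units_eq_one_or ε with rfl | rfl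
  · rw [one_smul]
  · rw [Units.neg_smul, one_smul, hf.map_neg, RCLike.norm_conj]

end IsPositiveDefinite

theorem norm_sub_sq_eq_normalize {V : Type*} [NormedAddCommGroup V] [InnerProductSpace ℝ V]
    (z w : V) :
    ‖z - w‖ ^ 2 = (‖z‖ - ‖w‖) ^ 2 +
      ‖z‖ * ‖w‖ * ‖NormedSpace.normalize z - NormedSpace.normalize w‖ ^ 2 := by
  rcases eq_or_ne z 0 with rfl | hz
  · simp
  rcases eq_or_ne w 0 with rfl | hw
  · simp
  rw [norm_sub_sq_real, norm_sub_sq_real, NormedSpace.norm_normalize_eq_one_iff.2 hz,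
    NormedSpace.norm_normalize_eq_one_iff.2 hw]
  have hzw : inner ℝ z w =
      ‖z‖ * ‖w‖ * inner ℝ (NormedSpace.normalize z) (NormedSpace.normalize w) := by
    conv_lhs => rw [← NormedSpace.norm_smul_normalize z, ← NormedSpace.norm_smul_normalize w]
    rw [real_inner_smul_left, real_inner_smul_right, mul_assoc]
  linear_combination -2 * hzw

theorem norm_prod_sub_prod_le {ι R : Type*} [NormedCommRing R] [NormOneClass R] (s : Finset ι)
    {a b : ι → R} (ha : ∀ j ∈ s, ‖a j‖ ≤ 1) (hb : ∀ j ∈ s, ‖b j‖ ≤ 1) :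
    ‖∏ j ∈ s, a j - ∏ j ∈ s, b j‖ ≤ ∑ j ∈ s, ‖a j - b j‖ := by
  classical
  induction s using Finset.induction_on with
  | empty => simp
  | insert j s hj ih =>
    simp only [Finset.forall_mem_insert] at ha hb
    have hA : ‖∏ j ∈ s, a j‖ ≤ 1 :=
      (s.norm_prod_le a).trans (Finset.prod_le_one (fun _ _ => norm_nonneg _) ha.2)
    rw [Finset.prod_insert hj, Finset.prod_insert hj, Finset.sum_insert hj]
    calc ‖a j * ∏ i ∈ s, a i - b j * ∏ i ∈ s, b i‖
        = ‖(a j - b j) * ∏ i ∈ s, a i + b j * (∏ i ∈ s, a i - ∏ i ∈ s, b i)‖ := by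
          congr 1
          ring
      _ ≤ ‖a j - b j‖ * ‖∏ i ∈ s, a i‖ + ‖b j‖ * ‖∏ i ∈ s, a i - ∏ i ∈ s, b i‖ :=
          (norm_add_le _ _).trans (add_le_add (norm_mul_le _ _) (norm_mul_le _ _))
      _ ≤ ‖a j - b j‖ + ∑ i ∈ s, ‖a i - b i‖ :=
          add_le_add (mul_le_of_le_one_right (norm_nonneg _) hA)
            ((mul_le_of_le_one_left (norm_nonneg _) hb.1).trans (ih ha.2 hb.2))

/-- The phase `z / |z|` of a complex number, with value `0` at `0`. -/
noncomputable def phase : ℂ →*₀ ℂ where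
  toFun := NormedSpace.normalize
  map_zero' := NormedSpace.normalize_zero_eq_zero
  map_one' := by simp [NormedSpace.normalize]
  map_mul' z w := by simp only [NormedSpace.normalize, norm_mul, mul_inv, smul_mul_smul_comm]

theorem phase_apply (z : ℂ) : phase z = NormedSpace.normalize z :=
  rfl

theorem norm_mul_phase (z : ℂ) : (‖z‖ : ℂ) * phase z = z := by
  rw [phase_apply, ← Complex.real_smul, NormedSpace.norm_smul_normalize]

theorem norm_phase {z : ℂ} (hz : z ≠ 0) : ‖phase z‖ = 1 :=
  NormedSpace.norm_normalize_eq_one_iff.2 hz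

theorem norm_phase_le_one (z : ℂ) : ‖phase z‖ ≤ 1 := by
  rcases eq_or_ne z 0 with rfl | hz
  · simp
  · exact (norm_phase hz).le

theorem phase_conj (z : ℂ) : phase ((starRingEnd ℂ) z) = (starRingEnd ℂ) (phase z) := by
  simp [phase_apply, NormedSpace.normalize]

/-- How far the phase of `f` is from being additive-to-multiplicative at `x, y`. -/
noncomputable def phaseDefect {G : Type*} [AddCommGroup G] (f : G → ℂ) (x y : G) : ℝ :=
  ‖phase (f (x + y)) - phase (f x * f y)‖

theorem IsPositiveDefinite.phaseDefect_units_smul {G : Type*} [AddCommGroup G] {f : G → ℂ}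
    (hf : IsPositiveDefinite f) (ε : ℤˣ) (x y : G) :
    phaseDefect f (ε • x) (ε • y) = phaseDefect f x y := by
  rcases Int.units_eq_one_or ε with rfl | rfl
  · simp only [one_smul]
  · simp only [phaseDefect, Units.neg_smul, one_smul, ← neg_add, hf.map_neg, ← map_mul, ← map_sub,
      phase_conj, RCLike.norm_conj]

theorem IsPositiveDefinite.phaseDefect_sq_le {G : Type*} [AddCommGroup G] {f : G → ℂ}
    (hf : IsPositiveDefinite f) (h0 : f 0 = 1) (x y : G) :
    (‖f (x + y)‖ - ‖f x‖ * ‖f y‖) ^ 2 + ‖f (x + y)‖ * (‖f x‖ * ‖f y‖) * phaseDefect f x y ^ 2 ≤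
      (1 - ‖f x‖ ^ 2) * (1 - ‖f y‖ ^ 2) := by
  rw [← norm_mul]
  exact (norm_sub_sq_eq_normalize _ _).symm.trans_le (hf.norm_sub_mul_sq_le h0 x y)

noncomputable instance : DivisibleBy (Additive Circle) ℤ :=
  Function.Surjective.divisibleBy Circle.expHom Circle.exp_surjective fun x k =>
    map_zsmul Circle.expHom k x

theorem exists_addChar_extension {G : Type*} [AddCommGroup G] (E : AddSubgroup G)
    (ψ : AddChar E Circle) : ∃ χ : AddChar G Circle, ∀ x : E, χ x = ψ x := by
  obtain ⟨φ, hφ⟩ :=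
    (Module.Baer.of_divisible (Additive Circle)).extension_property_addMonoidHom E.subtype
      E.subtype_injective ψ.toAddMonoidHom
  exact ⟨AddChar.toAddMonoidHomEquiv.symm φ, fun x =>
    congrArg Additive.toMul (DFunLike.congr_fun hφ x)⟩

/-- The Pólya equation `f x = ∏ⱼ f (± x / p ^ mⱼ)`, with `∑ⱼ p ^ (-2 mⱼ) = 1`, for a normalized
positive definite function `f` on an abelian group in which `δ` is division by `p`. -/
structure IsPolyaSolution {G ι : Type*} [AddCommGroup G] [Fintype ι] (p : ℕ) (δ : AddMonoid.End G)
    (m : ι → ℕ) (ε : ι → ℤˣ) (f : G → ℂ) : Prop where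
  posDef : IsPositiveDefinite f
  map_zero : f 0 = 1
  two_le : 2 ≤ p
  nsmul_div : ∀ x, p • δ x = x
  pos : ∀ j, 0 < m j
  sum_eq_one : ∑ j, (((p : ℝ) ^ 2) ^ m j)⁻¹ = 1
  eq_prod : ∀ x, f x = ∏ j, f (ε j • (δ ^ m j) x)

namespace IsPolyaSolution

variable {G ι : Type*} [AddCommGroup G] [Fintype ι] {p : ℕ} {δ : AddMonoid.End G} {m : ι → ℕ}
  {ε : ι → ℤˣ} {f : G → ℂ}

theorem isPolyaSequence (h : IsPolyaSolution p δ m ε f) (x : G) :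
    IsPolyaSequence ((p : ℝ) ^ 2) m fun k => ‖f ((δ ^ k) x)‖ ^ 2 where
  one_lt := one_lt_pow₀ (Nat.one_lt_cast.2 h.two_le) two_ne_zero
  pos := h.pos
  sum_eq_one := h.sum_eq_one
  nonneg _ := sq_nonneg _
  le_one k := h.posDef.norm_sq_le_one h.map_zero _
  eq_prod k := by
    rw [h.eq_prod, norm_prod, ← Finset.prod_pow]
    refine Finset.prod_congr rfl fun j _ => ?_
    rw [h.posDef.norm_map_units_smul, add_comm k, pow_add, AddMonoid.End.coe_mul,
      Function.comp_apply]
  one_sub_le k := by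
    have hk : (δ ^ k) x = p • (δ ^ (k + 1)) x := by
      rw [pow_succ', AddMonoid.End.coe_mul, Function.comp_apply, h.nsmul_div]
    rw [hk]
    exact h.posDef.one_sub_norm_sq_nsmul_le h.map_zero p _

theorem map_div_pow_ne_zero (h : IsPolyaSolution p δ m ε f) {x : G} (hx : f x ≠ 0) (k : ℕ) :
    f ((δ ^ k) x) ≠ 0 := by
  simpa using (h.isPolyaSequence x).ne_zero (l := 0) (by simpa using hx) k

theorem ne_zero_of_map_div_pow_ne_zero (h : IsPolyaSolution p δ m ε f) {x : G} {k : ℕ}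
    (hx : f ((δ ^ k) x) ≠ 0) : f x ≠ 0 := by
  simpa using (h.isPolyaSequence x).ne_zero (l := k) (by simpa using hx) 0

theorem div_nsmul (h : IsPolyaSolution p δ m ε f) (x : G) : δ (p • x) = x := by
  rw [map_nsmul, h.nsmul_div]

theorem map_nsmul_ne_zero_iff (h : IsPolyaSolution p δ m ε f) {x : G} :
    f (p • x) ≠ 0 ↔ f x ≠ 0 := by
  have hδ : (δ ^ 1) (p • x) = x := by rw [pow_one, h.div_nsmul]
  refine ⟨fun hx => ?_, fun hx => h.ne_zero_of_map_div_pow_ne_zero (k := 1) (by rwa [hδ])⟩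
  simpa only [hδ] using h.map_div_pow_ne_zero hx 1

theorem tendsto_norm_sq (h : IsPolyaSolution p δ m ε f) {x : G} (hx : f x ≠ 0) :
    Tendsto (fun k => ‖f ((δ ^ k) x)‖ ^ 2) atTop (𝓝 1) :=
  (h.isPolyaSequence x).tendsto_one (l := 0) (by simpa using hx)

theorem tendsto_seminorm (h : IsPolyaSolution p δ m ε f) {x : G} (hx : f x ≠ 0) :
    Tendsto (fun k => h.posDef.seminorm h.map_zero ((δ ^ k) x)) atTop (𝓝 0) := by
  simpa [IsPositiveDefinite.seminorm_apply] using ((h.tendsto_norm_sq hx).const_sub 1).sqrt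

theorem map_add_ne_zero (h : IsPolyaSolution p δ m ε f) {x y : G} (hx : f x ≠ 0) (hy : f y ≠ 0) :
    f (x + y) ≠ 0 := by
  have hlim := (h.tendsto_seminorm hx).add (h.tendsto_seminorm hy)
  rw [add_zero] at hlim
  obtain ⟨k, hk⟩ := (hlim.eventually_lt_const one_pos).exists
  refine h.ne_zero_of_map_div_pow_ne_zero (k := k) fun h0 => hk.not_ge ?_
  calc (1 : ℝ) = h.posDef.seminorm h.map_zero ((δ ^ k) (x + y)) := by
        rw [IsPositiveDefinite.seminorm_apply, h0, norm_zero, zero_pow two_ne_zero, sub_zero,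
          Real.sqrt_one]
    _ ≤ _ := by
      rw [map_add]
      exact map_add_le_add _ _ _

/-- The set where a solution does not vanish: the annihilator of the compact subgroup carrying the
Haar factor of the distribution. -/
def support (h : IsPolyaSolution p δ m ε f) : AddSubgroup G where
  carrier := {x | f x ≠ 0}
  zero_mem' := by simp [h.map_zero]
  add_mem' := h.map_add_ne_zero
  neg_mem' hx := by simpa [h.posDef.map_neg] using hx

theorem pow_mul_neg_log_norm_sq (h : IsPolyaSolution p δ m ε f) {x : G} (hx : f x ≠ 0) (k : ℕ) :
    ((p : ℝ) ^ 2) ^ k * -Real.log (‖f ((δ ^ k) x)‖ ^ 2) = -Real.log (‖f x‖ ^ 2) := by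
  simpa using (h.isPolyaSequence x).pow_mul_neg_log_eq (by simpa using hx) k

theorem tendsto_pow_mul_seminorm (h : IsPolyaSolution p δ m ε f) {x : G} (hx : f x ≠ 0) :
    Tendsto (fun k => (p : ℝ) ^ k * h.posDef.seminorm h.map_zero ((δ ^ k) x)) atTop
      (𝓝 √(-Real.log (‖f x‖ ^ 2))) := by
  have hlim := ((tendsto_mul_one_sub_iff_tendsto_mul_neg_log (h.tendsto_norm_sq hx)).2
    (tendsto_const_nhds.congr fun k => (h.pow_mul_neg_log_norm_sq hx k).symm)).sqrt
  refine hlim.congr fun k => ?_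
  rw [Real.sqrt_mul (by positivity), pow_right_comm, Real.sqrt_sq (by positivity),
    IsPositiveDefinite.seminorm_apply]

/-- The limit of the rescaled seminorms `p ^ k √(1 - |f (x / p ^ k)|²)` on the support. -/
noncomputable def logSeminorm (h : IsPolyaSolution p δ m ε f) : AddGroupSeminorm h.support where
  toFun x := √(-Real.log (‖f x‖ ^ 2))
  map_zero' := by simp [h.map_zero]
  add_le' x y := by
    refine le_of_tendsto_of_tendsto' (h.tendsto_pow_mul_seminorm (x + y).2)
      ((h.tendsto_pow_mul_seminorm x.2).add (h.tendsto_pow_mul_seminorm y.2)) fun k => ?_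
    rw [← mul_add, AddSubgroup.coe_add, map_add]
    exact mul_le_mul_of_nonneg_left (map_add_le_add _ _ _) (by positivity)
  neg' x := by simp [h.posDef.map_neg]

theorem sq_logSeminorm (h : IsPolyaSolution p δ m ε f) (x : h.support) :
    h.logSeminorm x ^ 2 = -Real.log (‖f x‖ ^ 2) :=
  Real.sq_sqrt (neg_nonneg.2 (Real.log_nonpos (sq_nonneg _)
    (h.posDef.norm_sq_le_one h.map_zero _)))

theorem logSeminorm_nsmul (h : IsPolyaSolution p δ m ε f) (x : h.support) :
    h.logSeminorm (p • x) = p * h.logSeminorm x := by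
  rw [← sq_eq_sq₀ (apply_nonneg _ _) (by positivity), mul_pow, h.sq_logSeminorm, h.sq_logSeminorm,
    ← h.pow_mul_neg_log_norm_sq (p • x).2 1, pow_one, pow_one, AddSubgroup.coe_nsmul, h.div_nsmul]

theorem exists_norm_eq_exp (h : IsPolyaSolution p δ m ε f) {i : G →+ ℚ}
    (hi : Function.Injective i) :
    ∃ σ : ℝ, 0 ≤ σ ∧ ∀ x, f x ≠ 0 → ‖f x‖ = Real.exp (-σ * (i x : ℝ) ^ 2) := by
  obtain ⟨c, hc⟩ := exists_eq_mul_abs_of_map_zsmul (i := i.comp h.support.subtype)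
    (hi.comp Subtype.val_injective) (addGroupSeminorm_zsmul h.two_le h.logSeminorm_nsmul)
  refine ⟨c ^ 2 / 2, by positivity, fun x hx => ?_⟩
  have hsq : -Real.log (‖f x‖ ^ 2) = (c * |(i x : ℝ)|) ^ 2 := by
    rw [← h.sq_logSeminorm ⟨x, hx⟩, hc]
    rfl
  rw [Real.log_pow, mul_pow, sq_abs] at hsq
  rw [← Real.exp_log (norm_pos_iff.2 hx)]
  congr 1
  push_cast at hsq
  linarith

theorem phaseDefect_le_sum (h : IsPolyaSolution p δ m ε f) (x y : G) :
    phaseDefect f x y ≤ ∑ j, phaseDefect f ((δ ^ m j) x) ((δ ^ m j) y) := by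
  rw [phaseDefect, h.eq_prod (x + y), h.eq_prod x, h.eq_prod y, ← Finset.prod_mul_distrib, map_prod,
    map_prod]
  refine (norm_prod_sub_prod_le _ (fun _ _ => norm_phase_le_one _)
    fun _ _ => norm_phase_le_one _).trans_eq (Finset.sum_congr rfl fun j _ => ?_)
  rw [← h.posDef.phaseDefect_units_smul (ε j), phaseDefect, map_add, smul_add]

theorem pow_mul_neg_log_norm (h : IsPolyaSolution p δ m ε f) {x : G} (hx : f x ≠ 0) (k : ℕ) :
    ((p : ℝ) ^ 2) ^ k * -Real.log ‖f ((δ ^ k) x)‖ = -Real.log ‖f x‖ := by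
  have hsq := h.pow_mul_neg_log_norm_sq hx k
  rw [Real.log_pow, Real.log_pow, Nat.cast_ofNat] at hsq
  linarith

theorem tendsto_norm (h : IsPolyaSolution p δ m ε f) {x : G} (hx : f x ≠ 0) :
    Tendsto (fun k => ‖f ((δ ^ k) x)‖) atTop (𝓝 1) := by
  simpa using (h.tendsto_norm_sq hx).sqrt

theorem tendsto_pow_mul_one_sub_norm (h : IsPolyaSolution p δ m ε f) {x : G} (hx : f x ≠ 0) :
    Tendsto (fun k => ((p : ℝ) ^ 2) ^ k * (1 - ‖f ((δ ^ k) x)‖)) atTop (𝓝 (-Real.log ‖f x‖)) :=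
  (tendsto_mul_one_sub_iff_tendsto_mul_neg_log (h.tendsto_norm hx)).2
    (tendsto_const_nhds.congr fun k => (h.pow_mul_neg_log_norm hx k).symm)

theorem tendsto_pow_mul_one_sub_norm_mul_norm (h : IsPolyaSolution p δ m ε f) {x y : G}
    (hx : f x ≠ 0) (hy : f y ≠ 0) :
    Tendsto (fun k => ((p : ℝ) ^ 2) ^ k * (1 - ‖f ((δ ^ k) x)‖ * ‖f ((δ ^ k) y)‖)) atTop
      (𝓝 (-Real.log ‖f x‖ + -Real.log ‖f y‖)) := by
  have h1 := (h.tendsto_norm hx).mul (h.tendsto_norm hy)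
  rw [one_mul] at h1
  refine (tendsto_mul_one_sub_iff_tendsto_mul_neg_log h1).2 (tendsto_const_nhds.congr fun k => ?_)
  rw [Real.log_mul (norm_ne_zero_iff.2 (h.map_div_pow_ne_zero hx k))
    (norm_ne_zero_iff.2 (h.map_div_pow_ne_zero hy k)), neg_add, mul_add,
    h.pow_mul_neg_log_norm hx, h.pow_mul_neg_log_norm hy]

-- For a Gaussian modulus the two sides of Krein's inequality agree to leading order at the origin.
theorem tendsto_krein_slack (h : IsPolyaSolution p δ m ε f) {i : G →+ ℝ} {σ : ℝ}
    (hσ : ∀ x, f x ≠ 0 → ‖f x‖ = Real.exp (-σ * i x ^ 2)) {x y : G}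
    (hx : f x ≠ 0) (hy : f y ≠ 0) :
    Tendsto (fun k => (((p : ℝ) ^ 2) ^ k) ^ 2 *
      ((1 - ‖f ((δ ^ k) x)‖ ^ 2) * (1 - ‖f ((δ ^ k) y)‖ ^ 2) -
        (‖f ((δ ^ k) (x + y))‖ - ‖f ((δ ^ k) x)‖ * ‖f ((δ ^ k) y)‖) ^ 2)) atTop (𝓝 0) := by
  have hlim := ((h.tendsto_pow_mul_one_sub_norm_mul_norm hx hx).mul
    (h.tendsto_pow_mul_one_sub_norm_mul_norm hy hy)).sub
    (((h.tendsto_pow_mul_one_sub_norm_mul_norm hx hy).sub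
      (h.tendsto_pow_mul_one_sub_norm (h.map_add_ne_zero hx hy))).pow 2)
  rw [hσ x hx, hσ y hy, hσ _ (h.map_add_ne_zero hx hy), map_add, Real.log_exp, Real.log_exp,
    Real.log_exp] at hlim
  convert hlim using 2 <;> ring

theorem tendsto_pow_mul_phaseDefect (h : IsPolyaSolution p δ m ε f) {i : G →+ ℝ} {σ : ℝ}
    (hσ : ∀ x, f x ≠ 0 → ‖f x‖ = Real.exp (-σ * i x ^ 2)) {x y : G}
    (hx : f x ≠ 0) (hy : f y ≠ 0) :
    Tendsto (fun k => ((p : ℝ) ^ 2) ^ k * phaseDefect f ((δ ^ k) x) ((δ ^ k) y)) atTop (𝓝 0) := by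
  have hxy := h.map_add_ne_zero hx hy
  let A (k : ℕ) : ℝ := ‖f ((δ ^ k) (x + y))‖ * (‖f ((δ ^ k) x)‖ * ‖f ((δ ^ k) y)‖)
  have hA : Tendsto A atTop (𝓝 1) := by
    simpa only [one_mul] using
      (h.tendsto_norm hxy).mul ((h.tendsto_norm hx).mul (h.tendsto_norm hy))
  have hApos (k : ℕ) : 0 < A k :=
    mul_pos (norm_pos_iff.2 (h.map_div_pow_ne_zero hxy k))
      (mul_pos (norm_pos_iff.2 (h.map_div_pow_ne_zero hx k))
        (norm_pos_iff.2 (h.map_div_pow_ne_zero hy k)))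
  have hlim := ((h.tendsto_krein_slack hσ hx hy).div hA one_ne_zero).sqrt
  rw [zero_div, Real.sqrt_zero] at hlim
  refine squeeze_zero (fun k => mul_nonneg (by positivity) (norm_nonneg _)) (fun k => ?_) hlim
  refine Real.le_sqrt_of_sq_le ((le_div_iff₀ (hApos k)).2 ?_)
  have hkrein := h.posDef.phaseDefect_sq_le h.map_zero ((δ ^ k) x) ((δ ^ k) y)
  rw [← map_add] at hkrein
  rw [mul_pow, mul_assoc, mul_comm _ (A k)]
  exact mul_le_mul_of_nonneg_left (le_sub_iff_add_le'.2 hkrein) (by positivity)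

theorem phase_map_add (h : IsPolyaSolution p δ m ε f) {i : G →+ ℝ} {σ : ℝ}
    (hσ : ∀ x, f x ≠ 0 → ‖f x‖ = Real.exp (-σ * i x ^ 2)) {x y : G}
    (hx : f x ≠ 0) (hy : f y ≠ 0) :
    phase (f (x + y)) = phase (f x) * phase (f y) := by
  have hseq := h.isPolyaSequence x
  have hle := le_of_tendsto_of_le_weighted_sum hseq.weight_nonneg hseq.sum_eq_one hseq.pos
    (fun k => ?_) (h.tendsto_pow_mul_phaseDefect hσ hx hy) 0
  · rw [pow_zero, one_mul] at hle
    rw [← map_mul]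
    exact sub_eq_zero.1 (norm_le_zero_iff.1 hle)
  · refine (mul_le_mul_of_nonneg_left (h.phaseDefect_le_sum _ _) (by positivity)).trans_eq ?_
    rw [Finset.mul_sum]
    refine Finset.sum_congr rfl fun j _ => ?_
    have hPj : ((p : ℝ) ^ 2) ^ m j ≠ 0 := (pow_pos hseq.base_pos _).ne'
    rw [add_comm k, pow_add, pow_add, AddMonoid.End.coe_mul, Function.comp_apply,
      Function.comp_apply, mul_assoc, inv_mul_cancel_left₀ hPj]

theorem exists_phase_eq (h : IsPolyaSolution p δ m ε f) {i : G →+ ℝ} {σ : ℝ}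
    (hσ : ∀ x, f x ≠ 0 → ‖f x‖ = Real.exp (-σ * i x ^ 2)) :
    ∃ χ : AddChar G Circle, ∀ x, f x ≠ 0 → phase (f x) = χ x := by
  let ψ : AddChar h.support Circle :=
    { toFun := fun x => ⟨phase (f x), mem_sphere_zero_iff_norm.2 (norm_phase x.2)⟩
      map_zero_eq_one' := Circle.ext (by simp [h.map_zero])
      map_add_eq_mul' := fun x y => Circle.ext (h.phase_map_add hσ x.2 y.2) }
  obtain ⟨χ, hχ⟩ := exists_addChar_extension h.support ψ
  exact ⟨χ, fun x hx => congrArg Circle.coeHom (hχ ⟨x, hx⟩).symm⟩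

theorem exists_eq_mul_exp (h : IsPolyaSolution p δ m ε f) {i : G →+ ℚ}
    (hi : Function.Injective i) :
    ∃ σ : ℝ, 0 ≤ σ ∧ ∃ χ : AddChar G Circle, ∀ x, f x ≠ 0 →
      f x = (χ x : ℂ) * Complex.exp (-(σ : ℂ) * (i x : ℂ) ^ 2) := by
  obtain ⟨σ, hσ0, hσ⟩ := h.exists_norm_eq_exp hi
  obtain ⟨χ, hχ⟩ := h.exists_phase_eq (i := (Rat.castHom ℝ).toAddMonoidHom.comp i) hσ
  refine ⟨σ, hσ0, χ, fun x hx => ?_⟩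
  rw [← hχ x hx, mul_comm]
  conv_lhs => rw [← norm_mul_phase (f x), hσ x hx]
  push_cast
  rfl

end IsPolyaSolution

section RatSubgroup

variable {Y : AddSubgroup ℚ} {r : ℚ}

theorem ratSMul_eq_iff (hr : r ≠ 0) :
    ratSMul r Y = Y ↔ (∀ y ∈ Y, r * y ∈ Y) ∧ ∀ y ∈ Y, r⁻¹ * y ∈ Y := by
  refine Set.Subset.antisymm_iff.trans (and_congr Set.image_subset_iff ?_)
  refine forall₂_congr fun y _ => ⟨?_, fun h => ⟨r⁻¹ * y, h, mul_inv_cancel_left₀ hr y⟩⟩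
  rintro ⟨z, hz, rfl⟩
  rwa [inv_mul_cancel_left₀ hr]

theorem inv_den_mul_mem (hr : ∀ y ∈ Y, r * y ∈ Y) {y : ℚ} (hy : y ∈ Y) :
    (r.den : ℚ)⁻¹ * y ∈ Y := by
  obtain ⟨u, v, huv⟩ := Rat.isCoprime_num_den r
  have hden : (r.den : ℚ) ≠ 0 := Nat.cast_ne_zero.2 r.den_ne_zero
  have hsplit : (r.den : ℚ)⁻¹ * y = u • (r * y) + v • y := by
    have huv' : (u * r.num + v * r.den : ℚ) = 1 := by exact_mod_cast huv
    rw [zsmul_eq_mul, zsmul_eq_mul, inv_mul_eq_iff_eq_mul₀ hden]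
    linear_combination (-y) * huv' - u * y * r.mul_den_eq_num
  rw [hsplit]
  exact Y.add_mem (Y.zsmul_mem (hr y hy) u) (Y.zsmul_mem hy v)

theorem ratSMul_natCast_eq_of_dvd_den (hr : ∀ y ∈ Y, r * y ∈ Y) {q : ℕ} (hq : q ∣ r.den) :
    ratSMul q Y = Y := by
  obtain ⟨k, hk⟩ := hq
  have hqk : q * k ≠ 0 := hk ▸ r.den_ne_zero
  have hq0 : (q : ℚ) ≠ 0 := Nat.cast_ne_zero.2 (left_ne_zero_of_mul hqk)
  have hk0 : (k : ℚ) ≠ 0 := Nat.cast_ne_zero.2 (right_ne_zero_of_mul hqk)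
  refine (ratSMul_eq_iff hq0).2 ⟨fun y hy => ?_, fun y hy => ?_⟩
  · rw [← nsmul_eq_mul]
    exact Y.nsmul_mem hy q
  · have hsplit : (q : ℚ)⁻¹ * y = k • ((r.den : ℚ)⁻¹ * y) := by
      rw [hk, nsmul_eq_mul]
      push_cast
      field_simp
    rw [hsplit]
    exact Y.nsmul_mem (inv_den_mul_mem hr hy) k

theorem exists_eq_units_div_pow {p : ℕ}
    (hqY : ∀ q : ℕ, q.Prime → q ≠ p → ratSMul (q : ℚ) Y ≠ (Y : Set ℚ)) (hr0 : r ≠ 0)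
    (hr1 : |r| < 1) (hrY : ratSMul r Y = Y) :
    ∃ (ε : ℤˣ) (m : ℕ), 0 < m ∧ r = (ε : ℤ) * (p : ℚ)⁻¹ ^ m := by
  obtain ⟨hmul, hinv⟩ := (ratSMul_eq_iff hr0).1 hrY
  have hden {q : ℕ} (hq : q.Prime) (hqd : q ∣ r.den) : q = p :=
    not_imp_not.1 (hqY q hq) (ratSMul_natCast_eq_of_dvd_den hmul hqd)
  have hnum {q : ℕ} (hq : q.Prime) (hqn : q ∣ r.num.natAbs) : q = p :=
    not_imp_not.1 (hqY q hq)
      (ratSMul_natCast_eq_of_dvd_den hinv (by rwa [Rat.den_inv_of_ne_zero hr0]))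
  have hden1 : r.den ≠ 1 := fun h => by
    have hint : (r.num : ℚ) = r := (Rat.den_eq_one_iff r).1 h
    rw [← hint] at hr1
    exact hr0 (Rat.num_eq_zero.1 (Int.abs_lt_one_iff.1 (by exact_mod_cast hr1)))
  obtain ⟨m, hm⟩ : ∃ m, r.den = p ^ m :=
    ⟨_, Nat.eq_prime_pow_of_unique_prime_dvd r.den_ne_zero hden⟩
  have hm0 : m ≠ 0 := by
    rintro rfl
    exact hden1 hm
  have hnum1 : r.num.natAbs = 1 := by
    by_contra h
    obtain ⟨q, hq, hqn⟩ := Nat.exists_prime_and_dvd h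
    have hqd : q ∣ r.den := by
      rw [hm, hnum hq hqn]
      exact dvd_pow_self p hm0
    exact Nat.not_coprime_of_dvd_of_dvd hq.one_lt hqn hqd r.reduced
  refine ⟨(Int.isUnit_iff_natAbs_eq.2 hnum1).unit, m, Nat.pos_of_ne_zero hm0, ?_⟩
  rw [IsUnit.unit_spec]
  conv_lhs => rw [← Rat.num_div_den r, hm]
  rw [Nat.cast_pow, div_eq_mul_inv, inv_pow]

theorem abs_lt_one_of_sum_sq_eq_one {ι : Type*} [Fintype ι] [Nontrivial ι] {r : ι → ℚ}
    (hr0 : ∀ j, r j ≠ 0) (hsum : ∑ j, r j ^ 2 = 1) (j : ι) : |r j| < 1 := by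
  obtain ⟨k, hk⟩ := exists_ne j
  rw [← sq_lt_one_iff_abs_lt_one, ← hsum]
  exact Finset.single_lt_sum (f := fun j => r j ^ 2) hk (Finset.mem_univ j) (Finset.mem_univ k)
    (sq_pos_of_ne_zero (hr0 k)) fun i _ _ => sq_nonneg (r i)

/-- Multiplication by `r` on a subgroup of `ℚ` that it preserves. -/
def ratMulEnd (Y : AddSubgroup ℚ) (r : ℚ) (hr : ∀ y ∈ Y, r * y ∈ Y) : AddMonoid.End Y :=
  ((AddMonoidHom.mulLeft r).comp Y.subtype).codRestrict Y fun y => hr y y.2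

theorem coe_ratMulEnd_pow_apply (hr : ∀ y ∈ Y, r * y ∈ Y) (k : ℕ) (y : Y) :
    ((ratMulEnd Y r hr ^ k) y : ℚ) = r ^ k * y := by
  induction k with
  | zero => simp
  | succ k ih =>
    rw [pow_succ', AddMonoid.End.coe_mul, Function.comp_apply, pow_succ', mul_assoc, ← ih]
    rfl

theorem isPolyaSolution_ratMulEnd {ι : Type*} [Fintype ι] {p : ℕ} (hp : 2 ≤ p)
    (hpY : ∀ y ∈ Y, (p : ℚ)⁻¹ * y ∈ Y) {ε : ι → ℤˣ} {m : ι → ℕ} (hm : ∀ j, 0 < m j) {r : ι → ℚ}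
    (hr : ∀ j, r j = (ε j : ℤ) * (p : ℚ)⁻¹ ^ m j) (hsum : ∑ j, r j ^ 2 = 1) {f : Y → ℂ}
    (hpd : IsPositiveDefinite f) (hf0 : f 0 = 1) (hmem : ∀ (j : ι) (y : Y), r j * (y : ℚ) ∈ Y)
    (heq : ∀ y : Y, f y = ∏ j, f ⟨r j * (y : ℚ), hmem j y⟩) :
    IsPolyaSolution p (ratMulEnd Y (p : ℚ)⁻¹ hpY) m ε f where
  posDef := hpd
  map_zero := hf0
  two_le := hp
  nsmul_div y := by
    have hp0 : (p : ℚ) ≠ 0 := by positivity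
    refine Subtype.ext ?_
    rw [AddSubgroup.coe_nsmul, nsmul_eq_mul, ← pow_one (ratMulEnd _ _ _), coe_ratMulEnd_pow_apply,
      pow_one, mul_inv_cancel_left₀ hp0]
  pos := hm
  sum_eq_one := by
    have hsq (j : ι) : ((((p : ℝ) ^ 2) ^ m j)⁻¹) = ((r j ^ 2 : ℚ) : ℝ) := by
      have hε : ((ε j : ℤ) : ℚ) ^ 2 = 1 := by
        rw [← Int.cast_pow, ← Units.val_pow_eq_pow_val, Int.units_sq, Units.val_one, Int.cast_one]
      rw [hr j, mul_pow, hε, one_mul, pow_right_comm, inv_pow, inv_pow]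
      push_cast
      rfl
    rw [Finset.sum_congr rfl fun j _ => hsq j]
    exact_mod_cast hsum
  eq_prod y := by
    refine (heq y).trans (Finset.prod_congr rfl fun j _ => congrArg f (Subtype.ext ?_))
    refine (congrArg (· * (y : ℚ)) (hr j)).trans ?_
    rw [Units.smul_def, AddSubgroup.coe_zsmul, coe_ratMulEnd_pow_apply, zsmul_eq_mul, mul_assoc]

end RatSubgroup

/-- The dual (Bochner) formulation of the generalized Pólya theorem on `a`-adic solenoids
satisfying condition (i): the positive definite solutions of
`f(y) = ∏ⱼ f(rⱼ y)` are of Gauss–Haar form. -/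
theorem generalized_polya_solenoid
    (p : ℕ) (hp : p.Prime) (Y : AddSubgroup ℚ) (hY : Y ≠ ⊥)
    (hpY : ratSMul (p : ℚ) Y = (Y : Set ℚ))
    (hqY : ∀ q : ℕ, q.Prime → q ≠ p → ratSMul (q : ℚ) Y ≠ (Y : Set ℚ))
    (n : ℕ) (hn : 2 ≤ n) (r : Fin n → ℚ) (hr0 : ∀ j, r j ≠ 0)
    (hrY : ∀ j, ratSMul (r j) Y = (Y : Set ℚ))
    (hsum : ∑ j, (r j) ^ 2 = 1)
    (f : Y → ℂ) (hpd : IsPositiveDefinite f) (hf0 : f 0 = 1)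
    (hmem : ∀ (j : Fin n) (y : Y), r j * (y : ℚ) ∈ Y)
    (heq : ∀ y : Y, f y = ∏ j, f ⟨r j * (y : ℚ), hmem j y⟩) :
    ∃ (σ : ℝ), 0 ≤ σ ∧
      ∃ (E : AddSubgroup ℚ), E ≤ Y ∧
        (∀ y : ℚ, y ∈ Y → (y ∈ E ↔ (p : ℚ) * y ∈ E)) ∧
        ∃ (χ : AddChar Y Circle),
          (∀ y : Y, (y : ℚ) ∈ E →
              f y = (χ y : ℂ) * Complex.exp (-(σ : ℂ) * ((y : ℚ) : ℂ) ^ 2)) ∧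
          (∀ y : Y, (y : ℚ) ∉ E → f y = 0) := by
  have hp0 : (p : ℚ) ≠ 0 := Nat.cast_ne_zero.2 hp.ne_zero
  have : Nontrivial (Fin n) := Fin.nontrivial_iff_two_le.2 hn
  choose ε m hm hr using fun j =>
    exists_eq_units_div_pow hqY (hr0 j) (abs_lt_one_of_sum_sq_eq_one hr0 hsum j) (hrY j)
  have h := isPolyaSolution_ratMulEnd hp.two_le ((ratSMul_eq_iff hp0).1 hpY).2 hm hr hsum hpd hf0
    hmem heq
  obtain ⟨σ, hσ, χ, hχ⟩ := h.exists_eq_mul_exp (i := Y.subtype) Y.subtype_injective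
  have hsupp (y : Y) : (y : ℚ) ∈ h.support.map Y.subtype ↔ f y ≠ 0 :=
    AddSubgroup.mem_map_iff_mem Y.subtype_injective
  refine ⟨σ, hσ, h.support.map Y.subtype, AddSubgroup.map_subtype_le _, fun y hy => ?_, χ,
    fun y hy => hχ y ((hsupp y).1 hy), fun y hy => not_not.1 fun h0 => hy ((hsupp y).2 h0)⟩
  have hpy : (p : ℚ) * y = (p • (⟨y, hy⟩ : Y) : Y) := by simp
  rw [hpy, hsupp, h.map_nsmul_ne_zero_iff]
  exact hsupp ⟨y, hy⟩
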